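/- Let x be a binary string of length n containing at least one block of zeros of length 5 and at least one block of zeros of length 1, and let x' be the binary string of length n obtained from x by deleting one zero from some block of zeros of length 5 and inserting one extra zero into some block of zeros of length 1. Then for every binary string y of length n, the optimal alignment scores satisfy |L(x', y) − L(x, y)| ≤ 1. -/

import Mathlib

open scoped Classical
open Finset

noncomputable section

/-- Score of aligning two letters (`true` = 1, `false` = 0):
`s(1,1) = S`, `s(0,0) = 1`, `s(1,0) = s(0,1) = 0`. -/
def letterScore (S : ℝ) (a b : Bool) : ℝ :=
  if a = true ∧ b = true then S else if a = false ∧ b = false then 1 else 0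

/-- Score of the alignment `(π, ν)` of the strings `x` and `y`. -/
def alignScore (S : ℝ) {n k : ℕ} (x y : Fin n → Bool) (π ν : Fin k → Fin n) : ℝ :=
  ∑ i : Fin k, letterScore S (x (π i)) (y (ν i))

/-- The optimal alignment score of two binary strings of length `n`. -/
def optScore (S : ℝ) (n : ℕ) (x y : Fin n → Bool) : ℝ :=
  sSup {r : ℝ | ∃ (k : ℕ) (π ν : Fin k → Fin n),
    StrictMono π ∧ StrictMono ν ∧ r = alignScore S x y π ν}

/-- The string `x`, extended by the (neutral) letter `true` outside `[0, n)`. -/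
def ext {n : ℕ} (x : Fin n → Bool) : ℕ → Bool :=
  fun j => if h : j < n then x ⟨j, h⟩ else true

/-- `blockStart x ℓ i` holds iff a block of zeros of length `ℓ` of `x` starts at position `i`:
positions `i, …, i+ℓ-1` carry zeros, and they are delimited by ones (or the ends of `x`). -/
def blockStart {n : ℕ} (x : Fin n → Bool) (ℓ i : ℕ) : Prop :=
  0 < ℓ ∧ i + ℓ ≤ n ∧ (∀ j ∈ Finset.Ico i (i + ℓ), ext x j = false) ∧
    (i = 0 ∨ ext x (i - 1) = true) ∧ ext x (i + ℓ) = true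

/-- The set of starting positions of blocks of zeros of length `ℓ` in `x`. -/
def starts {n : ℕ} (x : Fin n → Bool) (ℓ : ℕ) : Finset ℕ :=
  (Finset.range n).filter fun i => blockStart x ℓ i

/-- The number of blocks of zeros of length `ℓ` in `x`. -/
def numBlocks {n : ℕ} (x : Fin n → Bool) (ℓ : ℕ) : ℕ := (starts x ℓ).card

/-- Probability of an event under a uniform random binary string of length `n`. -/
def probX (n : ℕ) (E : (Fin n → Bool) → Prop) : ℝ :=
  ((Finset.univ.filter E).card : ℝ) / 2 ^ n

/-- Probability of an event under two independent uniform random binary strings of length `n`. -/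
def probXY (n : ℕ) (E : (Fin n → Bool) → (Fin n → Bool) → Prop) : ℝ :=
  ((Finset.univ.filter (fun p : (Fin n → Bool) × (Fin n → Bool) => E p.1 p.2)).card : ℝ) / 4 ^ n

/-- Expectation of a function of a uniform random binary string of length `n`. -/
def expX (n : ℕ) (f : (Fin n → Bool) → ℝ) : ℝ := (∑ x, f x) / 2 ^ n

/-- Expectation of a function of two independent uniform random binary strings of length `n`. -/
def expXY (n : ℕ) (f : (Fin n → Bool) → (Fin n → Bool) → ℝ) : ℝ := (∑ x, ∑ y, f x y) / 4 ^ n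

/-- The string obtained from `x` by removing one zero from the block of zeros starting at `p`
and inserting one extra zero into the block of zeros starting at `q`. -/
def modifyStr {n : ℕ} (x : Fin n → Bool) (p q : ℕ) : Fin n → Bool :=
  fun i => (((List.ofFn x).eraseIdx p).insertIdx (if p < q then q - 1 else q) false).getD i false

/-!
Deleting the chosen zero from `x` and deleting the extra zero from `x'` leave the same string `z`,
so `x` and `x'` both arise from `z` by inserting one zero. An alignment that avoids the inserted
zero is an alignment of `z`, so its score is attained no matter where the zero is inserted. An
alignment that uses the inserted zero does so in a single pair, whose score is at most `1`.
-/

section Score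

variable {n k m : ℕ}

theorem letterScore_le_max (S : ℝ) (a b : Bool) : letterScore S a b ≤ max S 1 := by
  cases a <;> cases b <;> simp [letterScore]

theorem letterScore_false_left_le_one (S : ℝ) (b : Bool) : letterScore S false b ≤ 1 := by
  cases b <;> simp [letterScore]

theorem alignScore_le_mul_max (S : ℝ) (x y : Fin n → Bool) {π : Fin k → Fin n}
    (hπ : π.Injective) (ν : Fin k → Fin n) : alignScore S x y π ν ≤ n * max S 1 := by
  have hkn : k ≤ n := by simpa using Fintype.card_le_of_injective π hπ
  calc
    alignScore S x y π ν ≤ ∑ _i : Fin k, max S 1 :=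
      sum_le_sum fun i _ => letterScore_le_max S (x (π i)) (y (ν i))
    _ = k * max S 1 := by simp
    _ ≤ n * max S 1 := by gcongr

theorem alignScore_le_optScore (S : ℝ) (x y : Fin n → Bool) {π ν : Fin k → Fin n}
    (hπ : StrictMono π) (hν : StrictMono ν) : alignScore S x y π ν ≤ optScore S n x y := by
  refine le_csSup ⟨n * max S 1, ?_⟩ ⟨k, π, ν, hπ, hν, rfl⟩
  rintro _ ⟨l, π', ν', hπ', -, rfl⟩
  exact alignScore_le_mul_max S x y hπ'.injective ν'

theorem optScore_le {S c : ℝ} {x y : Fin n → Bool}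
    (h : ∀ (k : ℕ) (π ν : Fin k → Fin n), StrictMono π → StrictMono ν →
      alignScore S x y π ν ≤ c) :
    optScore S n x y ≤ c := by
  refine csSup_le ⟨_, 0, Fin.elim0, Fin.elim0, fun i => i.elim0, fun i => i.elim0, rfl⟩ ?_
  rintro _ ⟨k, π, ν, hπ, hν, rfl⟩
  exact h k π ν hπ hν

theorem alignScore_eq_letterScore_add_removeNth (S : ℝ) (x y : Fin n → Bool)
    (π ν : Fin (k + 1) → Fin n) (i : Fin (k + 1)) :
    alignScore S x y π ν =
      letterScore S (x (π i)) (y (ν i)) + alignScore S x y (i.removeNth π) (i.removeNth ν) :=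
  Fin.sum_univ_succAbove _ i

theorem exists_strictMono_succAbove_comp_eq {ι : Type*} [Preorder ι] {π : ι → Fin (m + 1)}
    (hπ : StrictMono π) {a : Fin (m + 1)} (ha : ∀ i, π i ≠ a) :
    ∃ σ : ι → Fin m, StrictMono σ ∧ a.succAbove ∘ σ = π := by
  choose σ hσ using fun i => Fin.exists_succAbove_eq (ha i)
  obtain rfl : a.succAbove ∘ σ = π := funext hσ
  exact ⟨σ, fun i j hij => Fin.succAbove_lt_succAbove_iff.1 (hπ hij), rfl⟩

theorem alignScore_insertNth_succAbove_comp (S : ℝ) (z : Fin m → Bool) (y : Fin (m + 1) → Bool)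
    (a b : Fin (m + 1)) (c d : Bool) (σ : Fin k → Fin m) (ν : Fin k → Fin (m + 1)) :
    alignScore S (a.insertNth c z) y (a.succAbove ∘ σ) ν =
      alignScore S (b.insertNth d z) y (b.succAbove ∘ σ) ν := by
  simp only [alignScore, Function.comp_apply, Fin.insertNth_apply_succAbove]

theorem alignScore_insertNth_le_optScore_insertNth (S : ℝ) (z : Fin m → Bool)
    (y : Fin (m + 1) → Bool) {a : Fin (m + 1)} (b : Fin (m + 1)) (c d : Bool)
    {π ν : Fin k → Fin (m + 1)} (hπ : StrictMono π) (hν : StrictMono ν) (ha : ∀ i, π i ≠ a) :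
    alignScore S (a.insertNth c z) y π ν ≤ optScore S (m + 1) (b.insertNth d z) y := by
  obtain ⟨σ, hσ, rfl⟩ := exists_strictMono_succAbove_comp_eq hπ ha
  rw [alignScore_insertNth_succAbove_comp S z y a b c d]
  exact alignScore_le_optScore S _ y ((Fin.strictMono_succAbove b).comp hσ) hν

theorem optScore_insertNth_false_le_add_one (S : ℝ) (z : Fin m → Bool) (y : Fin (m + 1) → Bool)
    (a b : Fin (m + 1)) (d : Bool) :
    optScore S (m + 1) (a.insertNth false z) y ≤ optScore S (m + 1) (b.insertNth d z) y + 1 := by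
  refine optScore_le fun k π ν hπ hν => ?_
  by_cases ha : ∀ i, π i ≠ a
  · exact (alignScore_insertNth_le_optScore_insertNth S z y b false d hπ hν ha).trans
      (by linarith)
  obtain ⟨i, rfl⟩ : ∃ i, π i = a := by simpa using ha
  obtain _ | k := k
  · exact i.elim0
  have h_avoid (j : Fin k) : i.removeNth π j ≠ π i := hπ.injective.ne (i.succAbove_ne j)
  have h_rest := alignScore_insertNth_le_optScore_insertNth S z y b false d
    (hπ.removeNth i) (hν.removeNth i) h_avoid
  rw [alignScore_eq_letterScore_add_removeNth S _ y π ν i, Fin.insertNth_apply_same]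
  linarith [letterScore_false_left_le_one S (y (ν i))]

theorem abs_optScore_insertNth_false_sub_le_one (S : ℝ) (z : Fin m → Bool)
    (y : Fin (m + 1) → Bool) (a b : Fin (m + 1)) :
    |optScore S (m + 1) (a.insertNth false z) y - optScore S (m + 1) (b.insertNth false z) y|
      ≤ 1 :=
  abs_sub_le_iff.2 ⟨sub_le_iff_le_add'.2 (optScore_insertNth_false_le_add_one S z y a b false),
    sub_le_iff_le_add'.2 (optScore_insertNth_false_le_add_one S z y b a false)⟩

end Score

section Modify

variable {α : Type*} {n m : ℕ}

theorem ofFn_removeNth (x : Fin (m + 1) → α) (a : Fin (m + 1)) :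
    List.ofFn (a.removeNth x) = (List.ofFn x).eraseIdx a := by
  refine List.ext_getElem (by simp [List.length_eraseIdx, a.is_le]) fun i hi _ => ?_
  simp only [List.getElem_ofFn, List.getElem_eraseIdx, Fin.removeNth_apply, Fin.succAbove,
    Fin.lt_def, Fin.val_castSucc]
  split_ifs <;> rfl

theorem ofFn_insertNth (z : Fin m → α) (b : Fin (m + 1)) (c : α) :
    List.ofFn (b.insertNth (α := fun _ => α) c z) = (List.ofFn z).insertIdx b c := by
  generalize hw : b.insertNth (α := fun _ => α) c z = w
  obtain ⟨rfl, rfl⟩ := Fin.insertNth_eq_iff.1 hw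
  have hb : (b : ℕ) < (List.ofFn w).length := by simpa only [List.length_ofFn] using b.isLt
  rw [ofFn_removeNth]
  simpa only [List.getElem_ofFn] using (List.insertIdx_eraseIdx_getElem hb).symm

theorem modifyStr_eq_insertNth (x : Fin (m + 1) → Bool) (a b : Fin (m + 1)) {q : ℕ}
    (hb : (b : ℕ) = if (a : ℕ) < q then q - 1 else q) :
    modifyStr x a q = b.insertNth false (a.removeNth x) := by
  funext i
  rw [modifyStr, ← hb, ← ofFn_removeNth, ← ofFn_insertNth,
    List.getD_eq_getElem _ _ (by simpa only [List.length_ofFn] using i.isLt), List.getElem_ofFn]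

theorem ext_val (x : Fin n → Bool) (j : Fin n) : _root_.ext x j = x j :=
  dif_pos j.isLt

theorem blockStart.lt {x : Fin n → Bool} {ℓ i : ℕ} (h : blockStart x ℓ i) : i < n :=
  (Nat.lt_add_of_pos_right h.1).trans_le h.2.1

theorem blockStart.apply_start {x : Fin n → Bool} {ℓ i : ℕ} (h : blockStart x ℓ i) :
    x ⟨i, h.lt⟩ = false :=
  (ext_val x ⟨i, h.lt⟩).symm.trans
    (h.2.2.1 i (left_mem_Ico.2 (Nat.lt_add_of_pos_right h.1)))

end Modify

theorem score_changes_by_at_most_one_general (S : ℝ) {n : ℕ} (x y : Fin n → Bool) {p : Fin n}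
    (hp : x p = false) {q : ℕ} (hq : q ≤ n) :
    |optScore S n (modifyStr x p q) y - optScore S n x y| ≤ 1 := by
  obtain _ | m := n
  · exact p.elim0
  let b : Fin (m + 1) := ⟨if (p : ℕ) < q then q - 1 else q, by split_ifs <;> omega⟩
  have hx : p.insertNth false (p.removeNth x) = x := Fin.insertNth_eq_iff.2 ⟨hp.symm, rfl⟩
  have hx' : modifyStr x p q = b.insertNth false (p.removeNth x) :=
    modifyStr_eq_insertNth x p b rfl
  simpa only [hx', hx] using abs_optScore_insertNth_false_sub_le_one S (p.removeNth x) y b p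

/-- if `x` contains a block of zeros of length 5 starting at `p` and a block of
zeros of length 1 starting at `q`, and `x'` is obtained from `x` by deleting one zero from the
first block and inserting one extra zero into the second, then for every binary string `y` of
length `n`, `|L(x', y) - L(x, y)| ≤ 1`. -/
theorem score_changes_by_at_most_one (S : ℝ) (hS : 0 < S) (n : ℕ)
    (x y : Fin n → Bool) (p q : ℕ)
    (hp : blockStart x 5 p) (hq : blockStart x 1 q) :
    |optScore S n (modifyStr x p q) y - optScore S n x y| ≤ 1 :=
  score_changes_by_at_most_one_general S x y hp.apply_start hq.lt.le
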